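/- Let n, d, k be integers with d ≥ 3 and 1 ≤ k ≤ n. Then E[∫ f_{S_−(X)} dμ_k] ≥ (1/6)·d·2^n. -/

import Mathlib

open MeasureTheory Finset

noncomputable section

/-- Points of the grid `[2^n]^d` (coordinates taken 0-based). -/
abbrev GridPt (n d : ℕ) := Fin d → Fin (2^n)

/-- Normalized counting "volume" of a subset of the grid: `Vol(A) = 2^{-nd}|A|`. -/
def Vol (n d : ℕ) (A : Finset (GridPt n d)) : ℝ := (A.card : ℝ) / 2^(n*d)

/-- The ℓ1 metric on the grid. -/
def gdist {n d : ℕ} (u v : GridPt n d) : ℝ := ∑ i, |((u i : ℕ) : ℝ) - ((v i : ℕ) : ℝ)|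

/-- Indices of the dyadic cubes in `D_k`. -/
abbrev CubeIdx (d k : ℕ) := Fin d → Fin (2^k)

/-- The dyadic cube of side-cardinality `2^(n-k)` indexed by `j ∈ {0,…,2^k-1}^d`. -/
def cube (n d k : ℕ) (j : CubeIdx d k) : Finset (GridPt n d) :=
  Finset.univ.filter (fun x => ∀ i, (x i : ℕ) / 2^(n-k) = (j i : ℕ))

/-- `p = 2^{-4d}`. -/
def pp (d : ℕ) : ℝ := ((2:ℝ)^(4*d))⁻¹

/-- The law of each `X_Q`: takes values `±1` with probability `p/2` each
and `0` with probability `1-p`. -/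
def stepMeasure (d : ℕ) : Measure ℝ :=
  (Real.toNNReal (pp d / 2)) • Measure.dirac (1:ℝ)
  + (Real.toNNReal (pp d / 2)) • Measure.dirac (-1:ℝ)
  + (Real.toNNReal (1 - pp d)) • Measure.dirac (0:ℝ)

instance (d : ℕ) : IsFiniteMeasure (stepMeasure d) := by
  unfold stepMeasure; infer_instance

/-- The joint law of the i.i.d. family `{X_Q}_{Q ∈ D_k}`; a sample point
`ω : CubeIdx d k → ℝ` records the values `X_Q = ω Q`. -/
def prodMeasure (d k : ℕ) : Measure (CubeIdx d k → ℝ) :=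
  Measure.pi fun _ => stepMeasure d

/-- `μ_k(A) = ∑_{Q ∈ D_k} p⁻¹ 2^k X_Q Vol(A ∩ Q)`, as a function of the sample point `ω`. -/
def muMeas (n d k : ℕ) (A : Finset (GridPt n d)) (ω : CubeIdx d k → ℝ) : ℝ :=
  ∑ j : CubeIdx d k, (pp d)⁻¹ * 2^k * ω j * Vol n d (A ∩ cube n d k j)

/-- The function `f_S(z) = min{dist(z, ∪_{Q∈S} Q), d·2^n}`, with `f_∅ ≡ d·2^n`. -/
def fS (n d k : ℕ) (S : Finset (CubeIdx d k)) (z : GridPt n d) : ℝ :=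
  if h : (S.biUnion (cube n d k)).Nonempty
  then min ((S.biUnion (cube n d k)).inf' h (fun w => gdist z w)) ((d:ℝ) * 2^n)
  else (d:ℝ) * 2^n

/-- The random subset `S₋(X) = {Q ∈ D_k : X_Q = -1}`. -/
def Sminus (d k : ℕ) (ω : CubeIdx d k → ℝ) : Finset (CubeIdx d k) :=
  Finset.univ.filter (fun j => ω j = -1)

/-- `∫ f dVol`, where `Vol` is the normalized counting measure on the grid. -/
def intVol (n d : ℕ) (f : GridPt n d → ℝ) : ℝ := (∑ x, f x) / 2^(n*d)

/-- `∫ f dμ_k`, as a function of the sample point `ω`. -/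
def intMu (n d k : ℕ) (f : GridPt n d → ℝ) (ω : CubeIdx d k → ℝ) : ℝ :=
  ∑ x, f x * muMeas n d k {x} ω

lemma aux_abs (a b L u v : ℕ) (hL : 0 < L) (hu : u / L = a) (hv : v / L = b) :
    (L : ℝ) * ((((a - b) + (b - a) : ℕ) : ℝ) - 1) ≤ |(u : ℝ) - (v : ℝ)| := by
  have h1 := Nat.div_add_mod u L
  have h2 := Nat.mod_lt u hL
  have h3 := Nat.div_add_mod v L
  have h4 := Nat.mod_lt v hL
  rw [hu] at h1
  rw [hv] at h3
  have h1' : (L : ℝ) * a + ((u % L : ℕ) : ℝ) = u := by exact_mod_cast h1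
  have h3' : (L : ℝ) * b + ((v % L : ℕ) : ℝ) = v := by exact_mod_cast h3
  have h2' : ((u % L : ℕ) : ℝ) < L := by exact_mod_cast h2
  have h4' : ((v % L : ℕ) : ℝ) < L := by exact_mod_cast h4
  have h5 : (0 : ℝ) ≤ ((u % L : ℕ) : ℝ) := by positivity
  have h6 : (0 : ℝ) ≤ ((v % L : ℕ) : ℝ) := by positivity
  rcases le_total a b with h | h
  · have : (((a - b) + (b - a) : ℕ) : ℝ) = (b : ℝ) - a := by
      rw [Nat.sub_eq_zero_of_le h, zero_add, Nat.cast_sub h]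
    rw [this, abs_sub_comm]
    refine le_trans ?_ (le_abs_self _)
    nlinarith
  · have : (((a - b) + (b - a) : ℕ) : ℝ) = (a : ℝ) - b := by
      rw [Nat.sub_eq_zero_of_le h, add_zero, Nat.cast_sub h]
    rw [this]
    refine le_trans ?_ (le_abs_self _)
    nlinarith

lemma aux_geom1 (a m : ℕ) (h : m ≤ a) :
    ∑ b ∈ Finset.range m, (1/2 : ℝ)^((a - b) + (b - a)) ≤ (1/2)^(a - m) := by
  induction m with
  | zero => simp
  | succ m ih =>
    rw [Finset.sum_range_succ]
    have := ih (by omega)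
    have e : a - m = (a - (m+1)) + 1 := by omega
    have e2 : m - a = 0 := by omega
    rw [e2, add_zero]
    rw [e, pow_succ] at this
    rw [e, pow_succ]
    linarith

lemma aux_geom2 (a m : ℕ) :
    ∑ b ∈ Finset.range (a + m), (1/2 : ℝ)^((a - b) + (b - a)) ≤ 3 - 2 * (1/2)^m := by
  induction m with
  | zero => have := aux_geom1 a a le_rfl; norm_num at this ⊢; linarith
  | succ m ih =>
    rw [← add_assoc, Finset.sum_range_succ]
    have e : (a - (a + m)) + ((a + m) - a) = m := by omega
    rw [e, pow_succ]
    linarith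

lemma aux_geom (m : ℕ) (a : Fin m) :
    ∑ b : Fin m, (1/2 : ℝ)^(((a:ℕ) - b) + (b - a)) ≤ 3 := by
  rw [Fin.sum_univ_eq_sum_range (fun b => (1/2 : ℝ)^(((a:ℕ) - b) + (b - a)))]
  have := aux_geom2 a (m - a)
  rw [Nat.add_sub_cancel' a.2.le] at this
  have : (0:ℝ) ≤ (1/2)^(m - (a:ℕ)) := by positivity
  linarith

def cc {d k : ℕ} (j j' : CubeIdx d k) : ℝ :=
  ∏ i, 4 * (1/2 : ℝ)^(((j i : ℕ) - j' i) + (j' i - j i))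

lemma cc_nonneg {d k : ℕ} (j j' : CubeIdx d k) : 0 ≤ cc j j' :=
  Finset.prod_nonneg fun _ _ => by positivity

lemma sum_cc {d k : ℕ} (j : CubeIdx d k) : ∑ j', cc j j' ≤ 12 ^ d := by
  have := Finset.prod_univ_sum (fun _ : Fin d => (Finset.univ : Finset (Fin (2^k))))
    (fun i b => 4 * (1/2 : ℝ)^(((j i : ℕ) - b) + (b - j i)))
  rw [Fintype.piFinset_univ] at this
  unfold cc
  rw [← this]
  calc _ ≤ ∏ i : Fin d, (12 : ℝ) := by
        apply Finset.prod_le_prod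
        · intro i _; positivity
        · intro i _
          rw [← Finset.mul_sum]
          have := aux_geom _ (j i)
          linarith
    _ = _ := by simp

lemma cc_ge_one {d k : ℕ} (j j' : CubeIdx d k)
    (h : ∑ i, (((j i : ℕ) - j' i) + (j' i - j i)) < 2 * d) : 1 ≤ cc j j' := by
  unfold cc
  rw [Finset.prod_mul_distrib, Finset.prod_pow_eq_pow_sum]
  simp only [Finset.prod_const, Finset.card_univ, Fintype.card_fin]
  have h1 : (1/2 : ℝ)^(2*d) ≤ (1/2)^(∑ i, (((j i : ℕ) - j' i) + (j' i - j i))) :=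
    pow_le_pow_of_le_one (by norm_num) (by norm_num) h.le
  have h2 : (4:ℝ)^d * (1/2 : ℝ)^(2*d) = 1 := by
    rw [pow_mul, ← mul_pow]; norm_num
  calc (1:ℝ) = _ := h2.symm
    _ ≤ _ := by gcongr

lemma gdist_nonneg {n d : ℕ} (u v : GridPt n d) : 0 ≤ gdist u v :=
  Finset.sum_nonneg fun _ _ => abs_nonneg _

lemma fS_nonneg (n d k : ℕ) (S : Finset (CubeIdx d k)) (z : GridPt n d) : 0 ≤ fS n d k S z := by
  unfold fS
  split_ifs with h
  · apply le_min
    · rw [Finset.le_inf'_iff]; intro b _; exact gdist_nonneg _ _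
    · positivity
  · positivity

lemma fS_le (n d k : ℕ) (S : Finset (CubeIdx d k)) (z : GridPt n d) :
    fS n d k S z ≤ (d:ℝ) * 2^n := by
  unfold fS
  split_ifs with h
  · exact min_le_right _ _
  · exact le_rfl

lemma fS_zero (n d k : ℕ) (S : Finset (CubeIdx d k)) (z : GridPt n d) (j : CubeIdx d k)
    (hz : z ∈ cube n d k j) (hj : j ∈ S) : fS n d k S z = 0 := by
  apply le_antisymm _ (fS_nonneg _ _ _ _ _)
  have hm : z ∈ S.biUnion (cube n d k) := Finset.mem_biUnion.2 ⟨j, hj, hz⟩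
  unfold fS
  rw [dif_pos ⟨z, hm⟩]
  refine (min_le_left _ _).trans ?_
  refine (Finset.inf'_le _ hm).trans ?_
  simp [gdist]

lemma fS_ge (n d k : ℕ) (S : Finset (CubeIdx d k)) (z : GridPt n d) (j : CubeIdx d k)
    (hz : z ∈ cube n d k j) :
    (d : ℝ) * 2^(n-k) * (1 - ∑ j' ∈ S, cc j j') ≤ fS n d k S z := by
  by_cases h : ∃ j' ∈ S, ∑ i, (((j i : ℕ) - j' i) + (j' i - j i)) < 2 * d
  · obtain ⟨j', hj', hlt⟩ := h
    refine le_trans ?_ (fS_nonneg _ _ _ _ _)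
    have h1 := cc_ge_one j j' hlt
    have h2 : cc j j' ≤ ∑ j' ∈ S, cc j j' :=
      Finset.single_le_sum (f := fun j' => cc j j') (fun _ _ => cc_nonneg _ _) hj'
    apply mul_nonpos_of_nonneg_of_nonpos
    · positivity
    · linarith
  · push Not at h
    have h0 : (0:ℝ) ≤ ∑ j' ∈ S, cc j j' := Finset.sum_nonneg fun _ _ => cc_nonneg _ _
    have hA : (d : ℝ) * 2^(n-k) * (1 - ∑ j' ∈ S, cc j j') ≤ (d : ℝ) * 2^(n-k) := by
      apply mul_le_of_le_one_right
      · positivity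
      · linarith
    refine hA.trans ?_
    have hB : (d : ℝ) * 2^(n-k) ≤ d * 2^n := by
      gcongr
      · norm_num
      · omega
    unfold fS
    split_ifs with hne
    · apply le_min _ hB
      rw [Finset.le_inf'_iff]
      intro w hw
      obtain ⟨j', hj', hw⟩ := Finset.mem_biUnion.1 hw
      have hS := h j' hj'
      simp only [cube, Finset.mem_filter, Finset.mem_univ, true_and] at hz hw
      have hS' : (2 * d : ℝ) ≤ ∑ i, ((((j i : ℕ) - j' i) + (j' i - j i) : ℕ) : ℝ) := by
        exact_mod_cast hS
      have key : ∑ i, ((2^(n-k) : ℕ) : ℝ) * (((((j i : ℕ) - j' i) + (j' i - j i) : ℕ) : ℝ) - 1)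
          ≤ gdist z w := by
        unfold gdist
        exact Finset.sum_le_sum fun i _ => aux_abs _ _ _ _ _ (by positivity) (hz i) (hw i)
      refine le_trans ?_ key
      rw [← Finset.mul_sum, Finset.sum_sub_distrib]
      simp only [Finset.sum_const, Finset.card_univ, Fintype.card_fin, nsmul_eq_mul, mul_one]
      rw [mul_comm]
      push_cast at hS' ⊢
      gcongr
      linarith
    · exact hB

def JJ {n d k : ℕ} (hkn : k ≤ n) (x : GridPt n d) : CubeIdx d k := fun i =>
  ⟨(x i : ℕ) / 2^(n-k), by
    rw [Nat.div_lt_iff_lt_mul (by positivity), ← pow_add, Nat.add_sub_cancel' hkn]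
    exact (x i).2⟩

lemma mem_cube_iff {n d k : ℕ} (hkn : k ≤ n) (x : GridPt n d) (j : CubeIdx d k) :
    x ∈ cube n d k j ↔ j = JJ hkn x := by
  simp only [cube, Finset.mem_filter, Finset.mem_univ, true_and, JJ, funext_iff, Fin.ext_iff]
  exact forall_congr' fun i => eq_comm

lemma muMeas_single {n d k : ℕ} (hkn : k ≤ n) (x : GridPt n d) (ω : CubeIdx d k → ℝ) :
    muMeas n d k {x} ω = (pp d)⁻¹ * 2^k * (1 / 2^(n*d)) * ω (JJ hkn x) := by
  unfold muMeas
  rw [Finset.sum_eq_single (JJ hkn x)]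
  · have : ({x} : Finset (GridPt n d)) ∩ cube n d k (JJ hkn x) = {x} := by
      rw [Finset.inter_eq_left, Finset.singleton_subset_iff, mem_cube_iff hkn]
    rw [this]; simp only [Vol, Finset.card_singleton, Nat.cast_one]; ring
  · intro j _ hj
    have : ({x} : Finset (GridPt n d)) ∩ cube n d k j = ∅ := by
      rw [Finset.singleton_inter_of_notMem]
      rw [mem_cube_iff hkn]; exact hj
    rw [this]; simp [Vol]
  · simp

lemma pp_pos (d : ℕ) : 0 < pp d := by unfold pp; positivity
lemma pp_le (d : ℕ) : pp d ≤ 1 := by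
  unfold pp
  exact inv_le_one_of_one_le₀ (one_le_pow₀ (by norm_num))

lemma pp_mul (d : ℕ) : 12 ^ d * pp d ≤ 1 := by
  unfold pp
  rw [mul_inv_le_iff₀ (by positivity), one_mul, pow_mul]
  gcongr
  norm_num

instance stepProb (d : ℕ) : IsProbabilityMeasure (stepMeasure d) := by
  constructor
  have h1 := pp_pos d
  have h2 := pp_le d
  simp only [stepMeasure, Measure.add_apply, Measure.smul_apply, measure_univ]
  simp only [ENNReal.smul_def, smul_eq_mul, mul_one]
  norm_cast
  rw [← Real.toNNReal_add (by positivity) (by positivity),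
    ← Real.toNNReal_add (by positivity) (by linarith)]
  rw [show pp d / 2 + pp d / 2 + (1 - pp d) = 1 by ring]
  simp

instance prodProb (d k : ℕ) : IsProbabilityMeasure (prodMeasure d k) := by
  unfold prodMeasure; infer_instance

def uu (t : ℝ) : ℝ := if t = 1 then 1 else 0
def vv (t : ℝ) : ℝ := if t = -1 then 1 else 0

lemma uu_meas : Measurable uu := Measurable.ite (measurableSet_singleton 1) measurable_const measurable_const
lemma vv_meas : Measurable vv := Measurable.ite (measurableSet_singleton (-1)) measurable_const measurable_const

lemma integral_step (d : ℕ) (f : ℝ → ℝ) (hf : Measurable f) :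
    ∫ t, f t ∂(stepMeasure d) = pp d / 2 * f 1 + pp d / 2 * f (-1) + (1 - pp d) * f 0 := by
  have h1 := pp_pos d
  have h2 := pp_le d
  have hi : ∀ (c : NNReal) (a : ℝ), Integrable f (c • Measure.dirac a) := fun c a =>
    (integrable_dirac (by simp)).smul_measure_nnreal
  unfold stepMeasure
  rw [integral_add_measure ((hi _ _).add_measure (hi _ _)) (hi _ _),
    integral_add_measure (hi _ _) (hi _ _)]
  simp only [integral_smul_nnreal_measure, integral_dirac]
  simp only [NNReal.smul_def, smul_eq_mul]
  rw [Real.coe_toNNReal _ (by positivity), Real.coe_toNNReal _ (by linarith)]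

lemma integral_uu (d : ℕ) : ∫ t, uu t ∂(stepMeasure d) = pp d / 2 := by
  rw [integral_step _ _ uu_meas]; norm_num [uu]
lemma integral_vv (d : ℕ) : ∫ t, vv t ∂(stepMeasure d) = pp d / 2 := by
  rw [integral_step _ _ vv_meas]; norm_num [vv]

lemma integral_eval (d k : ℕ) (j : CubeIdx d k) (f : ℝ → ℝ) (hf : Measurable f) :
    ∫ ω, f (ω j) ∂(prodMeasure d k) = ∫ t, f t ∂(stepMeasure d) := by
  have h := measurePreserving_eval (fun _ : CubeIdx d k => stepMeasure d) j
  unfold prodMeasure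
  conv_rhs => rw [← h.map_eq]
  rw [integral_map h.measurable.aemeasurable hf.aestronglyMeasurable]

lemma integral_uv (d k : ℕ) (j j' : CubeIdx d k) :
    ∫ ω, uu (ω j) * vv (ω j') ∂(prodMeasure d k) ≤ (pp d / 2)^2 := by
  by_cases h : j = j'
  · subst h
    have : ∀ t, uu t * vv t = 0 := by
      intro t; unfold uu vv; split_ifs with h1 h2 <;> norm_num
      rw [h1] at h2; norm_num at h2
    simp only [this, integral_zero]
    positivity
  · have hI := ProbabilityTheory.iIndepFun_pi (μ := fun _ : CubeIdx d k => stepMeasure d)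
      (X := fun _ t => t) (fun _ => aemeasurable_id)
    have h2 := (hI.indepFun h).comp uu_meas vv_meas
    have := h2.integral_fun_mul_eq_mul_integral
      (by exact (uu_meas.comp (measurable_pi_apply j)).aestronglyMeasurable)
      (by exact (vv_meas.comp (measurable_pi_apply j')).aestronglyMeasurable)
    have e1 := integral_eval d k j uu uu_meas
    have e2 := integral_eval d k j' vv vv_meas
    rw [integral_uu] at e1
    rw [integral_vv] at e2
    simp only [Function.comp_apply] at this
    change ∫ ω, uu (ω j) * vv (ω j') ∂(prodMeasure d k) = 
      (∫ ω, uu (ω j) ∂(prodMeasure d k)) * ∫ ω, vv (ω j') ∂(prodMeasure d k) at this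
    rw [this, e1, e2, sq]

lemma ae_vals (d k : ℕ) : ∀ᵐ ω ∂(prodMeasure d k), ∀ j, ω j = 1 ∨ ω j = -1 ∨ ω j = 0 := by
  rw [ae_all_iff]
  intro j
  have h := measurePreserving_eval (fun _ : CubeIdx d k => stepMeasure d) j
  have h0 : ∀ᵐ t ∂(stepMeasure d), t = 1 ∨ t = -1 ∨ t = 0 := by
    have hm : MeasurableSet {t : ℝ | t = 1 ∨ t = -1 ∨ t = 0} :=
      (measurableSet_singleton (1:ℝ)).union
        ((measurableSet_singleton (-1:ℝ)).union (measurableSet_singleton (0:ℝ)))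
    unfold stepMeasure
    rw [ae_add_measure_iff, ae_add_measure_iff]
    refine ⟨⟨?_, ?_⟩, ?_⟩ <;>
    · refine Measure.ae_smul_measure ?_ _
      rw [ae_dirac_iff hm]
      simp
  exact h.quasiMeasurePreserving.ae h0

lemma Sminus_meas (d k : ℕ) : @Measurable _ _ _ ⊤ (Sminus d k) := by
  letI : MeasurableSpace (Finset (CubeIdx d k)) := ⊤
  apply measurable_to_countable'
  intro S
  have : Sminus d k ⁻¹' {S} = ⋂ j, {ω | ω j = -1 ↔ j ∈ S} := by
    ext ω
    simp [Sminus, Finset.ext_iff]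
  rw [this]
  refine MeasurableSet.iInter fun j => ?_
  have h1 : MeasurableSet {ω : CubeIdx d k → ℝ | ω j = -1} :=
    (measurable_pi_apply j) (measurableSet_singleton (-1))
  by_cases h : j ∈ S
  · simpa [h] using h1
  · have e : {ω : CubeIdx d k → ℝ | ω j = -1 ↔ j ∈ S} = {ω | ω j = -1}ᶜ := by
      ext ω; simp [h]
    rw [e]; exact h1.compl

lemma integrable_main (n d k : ℕ) (hkn : k ≤ n) :
    Integrable (fun ω => intMu n d k (fS n d k (Sminus d k ω)) ω) (prodMeasure d k) := by
  unfold intMu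
  refine integrable_finsetSum _ fun x _ => ?_
  simp only [muMeas_single hkn]
  have hf : Measurable (fun ω => fS n d k (Sminus d k ω) x) :=
    (@measurable_from_top _ _ _ (fun S => fS n d k S x)).comp (Sminus_meas d k)
  refine Integrable.of_bound (C := d * 2^n * (((pp d)⁻¹ * 2^k * (1 / 2^(n*d))) * 1)) ?_ ?_
  · exact (hf.mul ((measurable_pi_apply _).const_mul _)).aestronglyMeasurable
  · filter_upwards [ae_vals d k] with ω hω
    have hp := pp_pos d
    rw [norm_mul, norm_mul]
    rw [Real.norm_of_nonneg (fS_nonneg _ _ _ _ _),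
      Real.norm_of_nonneg (show 0 ≤ (pp d)⁻¹ * 2^k * (1 / 2^(n*d)) by positivity)]
    have : ‖ω (JJ hkn x)‖ ≤ 1 := by
      rcases hω (JJ hkn x) with h | h | h <;> rw [h] <;> norm_num
    gcongr
    exact fS_le _ _ _ _ _

lemma pointwise (n d k : ℕ) (hkn : k ≤ n) (x : GridPt n d) (ω : CubeIdx d k → ℝ)
    (hω : ∀ j, ω j = 1 ∨ ω j = -1 ∨ ω j = 0) :
    (d : ℝ) * 2^(n-k) * (uu (ω (JJ hkn x))
      - ∑ j', cc (JJ hkn x) j' * (uu (ω (JJ hkn x)) * vv (ω j')))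
    ≤ fS n d k (Sminus d k ω) x * ω (JJ hkn x) := by
  have hx : x ∈ cube n d k (JJ hkn x) := (mem_cube_iff hkn _ _).2 rfl
  rcases hω (JJ hkn x) with h | h | h
  · have := fS_ge n d k (Sminus d k ω) x _ hx
    rw [h, mul_one]
    refine le_trans (le_of_eq ?_) this
    simp [uu, vv, Sminus, Finset.sum_filter]
  · rw [fS_zero n d k _ x _ hx (by simp [Sminus, h]), h]
    norm_num [uu]
  · rw [h]; norm_num [uu]

/-- `E[∫ f_{S₋(X)} dμ_k] ≥ (1/6)·d·2^n`. -/
theorem expected_intMu_ge (n d k : ℕ) (hd : 3 ≤ d) (hk : 1 ≤ k) (hkn : k ≤ n) :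
    ∫ ω, intMu n d k (fS n d k (Sminus d k ω)) ω ∂(prodMeasure d k)
      ≥ (1/6) * (d:ℝ) * 2^n := by
  have hp := pp_pos d
  set K : ℝ := (pp d)⁻¹ * 2^k * (1 / 2^(n*d)) with hK
  have hK0 : 0 ≤ K := by positivity
  have iu : ∀ j : CubeIdx d k, Integrable (fun ω => uu (ω j)) (prodMeasure d k) := by
    intro j
    refine Integrable.of_bound (C := 1)
      (uu_meas.comp (measurable_pi_apply j)).aestronglyMeasurable (ae_of_all _ fun ω => ?_)
    unfold uu; split_ifs <;> norm_num
  have iuv : ∀ j j' : CubeIdx d k,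
      Integrable (fun ω => uu (ω j) * vv (ω j')) (prodMeasure d k) := by
    intro j j'
    refine Integrable.of_bound (C := 1)
      ((uu_meas.comp (measurable_pi_apply j)).mul
        (vv_meas.comp (measurable_pi_apply j'))).aestronglyMeasurable (ae_of_all _ fun ω => ?_)
    unfold uu vv; split_ifs <;> norm_num
  have isum : ∀ j : CubeIdx d k, Integrable
      (fun ω => ∑ j', cc j j' * (uu (ω j) * vv (ω j'))) (prodMeasure d k) := fun j =>
    integrable_finsetSum _ fun j' _ => (iuv j j').const_mul _
  have iterm : ∀ j : CubeIdx d k, Integrable (fun ω => K * ((d : ℝ) * 2^(n-k) *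
      (uu (ω j) - ∑ j', cc j j' * (uu (ω j) * vv (ω j'))))) (prodMeasure d k) := fun j =>
    (((iu j).sub (isum j)).const_mul _).const_mul _
  have hlow : ∫ ω, ∑ x : GridPt n d, K * ((d : ℝ) * 2^(n-k) * (uu (ω (JJ hkn x))
      - ∑ j', cc (JJ hkn x) j' * (uu (ω (JJ hkn x)) * vv (ω j')))) ∂(prodMeasure d k)
      ≤ ∫ ω, intMu n d k (fS n d k (Sminus d k ω)) ω ∂(prodMeasure d k) := by
    refine integral_mono_ae (integrable_finsetSum _ fun x _ => iterm _)
      (integrable_main n d k hkn) ?_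
    filter_upwards [ae_vals d k] with ω hω
    unfold intMu
    refine Finset.sum_le_sum fun x _ => ?_
    rw [muMeas_single hkn, ← hK]
    calc _ ≤ K * (fS n d k (Sminus d k ω) x * ω (JJ hkn x)) :=
          mul_le_mul_of_nonneg_left (pointwise n d k hkn x ω hω) hK0
      _ = _ := by ring
  refine ge_iff_le.2 (le_trans ?_ hlow)
  rw [integral_finsetSum _ fun x _ => iterm _]
  have hterm : ∀ j : CubeIdx d k, K * ((d : ℝ) * 2^(n-k) * (pp d / 4)) ≤
      ∫ ω, K * ((d : ℝ) * 2^(n-k) *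
      (uu (ω j) - ∑ j', cc j j' * (uu (ω j) * vv (ω j')))) ∂(prodMeasure d k) := by
    intro j
    rw [integral_const_mul, integral_const_mul, integral_sub (iu j) (isum j),
      integral_finsetSum _ (fun j' _ => (iuv j j').const_mul _),
      integral_eval _ _ _ _ uu_meas, integral_uu]
    simp only [integral_const_mul]
    have hs : ∑ j', cc j j' * ∫ ω, uu (ω j) * vv (ω j') ∂(prodMeasure d k)
        ≤ 12^d * (pp d / 2)^2 := by
      calc _ ≤ ∑ j', cc j j' * (pp d / 2)^2 :=
            Finset.sum_le_sum fun j' _ =>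
              mul_le_mul_of_nonneg_left (integral_uv d k j j') (cc_nonneg _ _)
        _ = (∑ j', cc j j') * (pp d / 2)^2 := by rw [Finset.sum_mul]
        _ ≤ _ := mul_le_mul_of_nonneg_right (sum_cc j) (by positivity)
    have := pp_mul d
    gcongr
    nlinarith
  refine le_trans ?_ (Finset.sum_le_sum fun x _ => hterm (JJ hkn x))
  rw [Finset.sum_const, nsmul_eq_mul]
  simp only [Finset.card_univ, Fintype.card_fun, Fintype.card_fin]
  have e : (2:ℝ)^n = 2^k * 2^(n-k) := by rw [← pow_add, Nat.add_sub_cancel' hkn]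
  have e2 : (((2^n)^d : ℕ) : ℝ) * (K * ((d : ℝ) * 2^(n-k) * (pp d / 4))) = d * 2^n / 4 := by
    rw [hK, e]
    push_cast
    rw [← pow_mul]
    field_simp
  rw [e2]
  have : (0:ℝ) ≤ d * 2^n := by positivity
  linarith
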